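/- Every n×n real polynomial matrix b(z) = b₀ + b₁z + ⋯ + b_q z^q with det b(z) ≠ 0 for all complex z with |z| = 1 admits a Wiener–Hopf factorisation: there exist an n×n real polynomial matrix p(z) with det p(z) ≠ 0 for all complex |z| ≤ 1, integers κ₁ ≥ ⋯ ≥ κₙ, and an n×n real polynomial matrix F(w) with det F(w) ≠ 0 for all complex |w| ≤ 1, such that b(z) = p(z) · diag(z^{κ₁},…,z^{κₙ}) · F(1/z) holds as an identity of matrices over the field of real rational functions. -/

import Mathlib

open Polynomial Matrix

/-- Evaluation of a real polynomial matrix at a complex point (entrywise). -/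
noncomputable def evalMat {n : ℕ} (M : Matrix (Fin n) (Fin n) (Polynomial ℝ)) (z : ℂ) :
    Matrix (Fin n) (Fin n) ℂ :=
  M.map (fun r => Polynomial.aeval z r)

/-- A polynomial matrix viewed as a matrix over the field of real rational functions. -/
noncomputable def polyToRat {n : ℕ} (M : Matrix (Fin n) (Fin n) (Polynomial ℝ)) :
    Matrix (Fin n) (Fin n) (RatFunc ℝ) :=
  M.map (algebraMap (Polynomial ℝ) (RatFunc ℝ))

/-- The rational matrix F(1/z) obtained from a polynomial matrix F by substituting 1/z. -/
noncomputable def invSub {n : ℕ} (F : Matrix (Fin n) (Fin n) (Polynomial ℝ)) :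
    Matrix (Fin n) (Fin n) (RatFunc ℝ) :=
  F.map (fun r => Polynomial.aeval ((RatFunc.X : RatFunc ℝ)⁻¹) r)

/-- The diagonal matrix diag(z^{κ₁},…,z^{κₙ}) over ℝ(z). -/
noncomputable def sMat (n : ℕ) (κ : Fin n → ℤ) : Matrix (Fin n) (Fin n) (RatFunc ℝ) :=
  Matrix.diagonal (fun i => (RatFunc.X : RatFunc ℝ) ^ (κ i))

/-- `IsWHF b p F κ` : b(z) = p(z) · diag(z^{κᵢ}) · F(1/z) is a Wiener–Hopf factorisation. -/
structure IsWHF {n : ℕ} (b p F : Matrix (Fin n) (Fin n) (Polynomial ℝ))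
    (κ : Fin n → ℤ) : Prop where
  p_noZero : ∀ z : ℂ, ‖z‖ ≤ 1 → (evalMat p z).det ≠ 0
  F_noZero : ∀ w : ℂ, ‖w‖ ≤ 1 → (evalMat F w).det ≠ 0
  anti : ∀ i j : Fin n, i ≤ j → κ j ≤ κ i
  eq : polyToRat b = polyToRat p * sMat n κ * invSub F

/-- Partial indices of type (κ,k): the first k indices equal κ+1, the rest κ. -/
def idx (n : ℕ) (κ k : ℕ) : Fin n → ℤ := fun i => if (i : ℕ) < k then (κ : ℤ) + 1 else (κ : ℤ)

/-!
Among all factorisations `b = Q * r` over `ℝ[X]` in which `det Q` is a product of irreducible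
polynomials with no zero in the closed unit disc, take one whose `r` has the least sum of row
degrees. Then the leading row coefficient matrix of `r` is invertible and `det r` has no zero with
`1 < ‖z‖`, since otherwise some row of `r` could be replaced by one of smaller degree, after
dividing by an irreducible factor of `det r` in the second case. Reversing the coefficients of each
row of `r` therefore gives `r(z) = diag(z ^ dᵢ) F(1/z)`, where `dᵢ` are the row degrees and `det F`
has no zero in the closed disc: `det F(0)` is the determinant of the leading row coefficients, and
`det F(w)` for `w ≠ 0` vanishes only where `det r(1/w)` does.
-/

section RowDegree

variable {R ι κ : Type*} [Semiring R] [Fintype κ]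

/-- The row degree of a polynomial matrix: the largest `natDegree` in row `i`. A zero row has row
degree `0`. -/
def rowDegree (m : Matrix ι κ R[X]) (i : ι) : ℕ :=
  Finset.univ.sup fun j => (m i j).natDegree

/-- The leading row coefficient matrix, whose `i`-th row collects the coefficients of
`X ^ rowDegree m i`. The matrix `m` is row reduced when this has nonzero determinant. -/
def leadingRowCoeff (m : Matrix ι κ R[X]) : Matrix ι κ R :=
  of fun i j => (m i j).coeff (rowDegree m i)

/-- The row-reversed matrix: the entries of row `i` are reversed with respect to the row degree, so
that it represents the factor `F` in `m(z) = diag(z ^ rowDegree m i) F(1/z)`. -/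
noncomputable def reflectRows (m : Matrix ι κ R[X]) : Matrix ι κ R[X] :=
  of fun i j => reflect (rowDegree m i) (m i j)

lemma natDegree_le_rowDegree (m : Matrix ι κ R[X]) (i : ι) (j : κ) :
    (m i j).natDegree ≤ rowDegree m i :=
  Finset.le_sup (f := fun j => (m i j).natDegree) (Finset.mem_univ j)

lemma degree_vecMul_lt [Fintype ι] {m : Matrix ι κ R[X]} {v : ι → R[X]} {d : ℕ}
    (h : ∀ i, v i ≠ 0 → (v i).natDegree + rowDegree m i < d) (j : κ) :
    ((v ᵥ* m) j).degree < d := by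
  refine mem_degreeLT.mp (Submodule.sum_mem _ fun i _ => mem_degreeLT.mpr ?_)
  by_cases hi : v i = 0
  · simp [hi]
  · calc (v i * m i j).degree
        ≤ ((v i).natDegree + (m i j).natDegree : ℕ) :=
          degree_le_of_natDegree_le natDegree_mul_le
      _ < d := by
          have := natDegree_le_rowDegree m i j
          have := h i hi
          exact_mod_cast (by omega : (v i).natDegree + (m i j).natDegree < d)

end RowDegree

section Reflection

variable {ι κ : Type*} [Fintype κ]

lemma map_aeval_zero_reflectRows {R A : Type*} [CommSemiring R] [Semiring A] [Algebra R A]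
    (m : Matrix ι κ R[X]) :
    (reflectRows m).map (aeval (0 : A)) = (leadingRowCoeff m).map (algebraMap R A) := by
  ext i j
  simp [reflectRows, leadingRowCoeff, aeval_def, eval₂_at_zero, coeff_reflect, revAt_le]

lemma map_aeval_eq_diagonal_mul_map_aeval_reflectRows [Fintype ι] [DecidableEq ι]
    {R A : Type*} [CommSemiring R] [Semifield A] [Algebra R A] (m : Matrix ι κ R[X]) {x : A}
    (hx : x ≠ 0) :
    m.map (aeval x) =
      diagonal (fun i => x ^ rowDegree m i) * (reflectRows m).map (aeval x⁻¹) := by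
  let : Invertible x := invertibleOfNonzero hx
  ext i j
  have h := eval₂_reflect_mul_pow (algebraMap R A) x _ _ (natDegree_le_rowDegree m i j)
  rw [invOf_eq_inv] at h
  rw [diagonal_mul, map_apply, map_apply, aeval_def, ← h, mul_comm]
  rfl

lemma aeval_det_reflectRows_ne_zero [DecidableEq κ] {K L : Type*} [Field K] [Field L] [Algebra K L]
    {m : Matrix κ κ K[X]} (hlead : (leadingRowCoeff m).det ≠ 0) {w : L}
    (hw : w ≠ 0 → aeval w⁻¹ m.det ≠ 0) : aeval w (reflectRows m).det ≠ 0 := by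
  rw [AlgHom.map_det, AlgHom.mapMatrix_apply]
  rcases eq_or_ne w 0 with rfl | hw0
  · rw [map_aeval_zero_reflectRows, ← RingHom.mapMatrix_apply, ← RingHom.map_det]
    exact (_root_.map_ne_zero (algebraMap K L)).mpr hlead
  · have hdet := hw hw0
    rw [AlgHom.map_det, AlgHom.mapMatrix_apply,
      map_aeval_eq_diagonal_mul_map_aeval_reflectRows m (inv_ne_zero hw0), inv_inv,
      det_mul] at hdet
    exact right_ne_zero_of_mul hdet

end Reflection

section RowReduction

variable {R K ι κ : Type*} [CommRing R] [Field K] [Fintype ι] [DecidableEq ι]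

lemma det_one_updateRow (i : ι) (v : ι → R) : ((1 : Matrix ι ι R).updateRow i v).det = v i := by
  rw [← cramer_transpose_apply, transpose_one, cramer_one, Module.End.one_apply]

lemma exists_eq_mul_updateRow {m : Matrix ι κ R} {v : ι → R} {i : ι} (hvi : v i = 1) {g : R}
    {r : κ → R} (hr : v ᵥ* m = g • r) :
    ∃ Q : Matrix ι ι R, Q.det = g ∧ m = Q * m.updateRow i r := by
  let E : Matrix ι ι R := (1 : Matrix ι ι R).updateRow i v
  let D : Matrix ι ι R := (1 : Matrix ι ι R).updateRow i (Pi.single i g)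
  have hE : E.det = 1 := (det_one_updateRow i v).trans hvi
  have hD : D.det = g := (det_one_updateRow i _).trans (Pi.single_eq_same (M := fun _ => R) i g)
  have hED : E * m = D * m.updateRow i r := by
    simp only [E, D, updateRow_mul, Matrix.one_mul, hr, single_vecMul, updateRow_idem]
    simp [row]
  refine ⟨E.adjugate * D, by rw [det_mul, det_adjugate, hE, hD, one_pow, one_mul], ?_⟩
  rw [Matrix.mul_assoc, ← hED, ← Matrix.mul_assoc, adjugate_mul, hE, one_smul, Matrix.one_mul]

lemma sum_rowDegree_updateRow_lt [Fintype κ] {m : Matrix ι κ R[X]} {i : ι} {r : κ → R[X]}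
    (hr : ∀ j, (r j).degree < rowDegree m i) (hr0 : r ≠ 0) :
    ∑ k, rowDegree (m.updateRow i r) k < ∑ k, rowDegree m k := by
  have hlt : rowDegree (m.updateRow i r) i < rowDegree m i := by
    obtain ⟨j₀, hj₀⟩ := Function.ne_iff.mp hr0
    have hpos := (Nat.zero_le _).trans_lt ((natDegree_lt_iff_degree_lt hj₀).mpr (hr j₀))
    refine (Finset.sup_lt_iff hpos).mpr fun j _ => ?_
    rw [updateRow_self]
    rcases eq_or_ne (r j) 0 with hj | hj
    · rwa [hj, natDegree_zero]
    · exact (natDegree_lt_iff_degree_lt hj).mpr (hr j)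
  refine Finset.sum_lt_sum (fun k _ => ?_) ⟨i, Finset.mem_univ i, hlt⟩
  rcases eq_or_ne k i with rfl | hk
  · exact hlt.le
  · simp [rowDegree, updateRow_ne hk]

lemma exists_eq_mul_of_vecMul_eq_smul {m : Matrix ι ι R[X]} (hm : m.det ≠ 0) {v : ι → R[X]} {i : ι}
    (hvi : v i = 1) {g : R[X]} {r : ι → R[X]} (hr : v ᵥ* m = g • r)
    (hdeg : ∀ j, (r j).degree < rowDegree m i) :
    ∃ Q m' : Matrix ι ι R[X], m = Q * m' ∧ Q.det = g ∧
      ∑ k, rowDegree m' k < ∑ k, rowDegree m k := by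
  obtain ⟨Q, hQ, hmQ⟩ := exists_eq_mul_updateRow hvi hr
  refine ⟨Q, m.updateRow i r, hmQ, hQ, sum_rowDegree_updateRow_lt hdeg ?_⟩
  rintro rfl
  apply hm
  rw [hmQ, det_mul, det_eq_zero_of_row_eq_zero (A := m.updateRow i 0) i (by simp), mul_zero]

-- If `c` is a left kernel vector of the leading coefficients and row `i` has maximal degree among
-- the rows with `c j ≠ 0`, then `∑ j, (c j / c i) X ^ (dᵢ - dⱼ) • m j` cancels the leading
-- coefficients of row `i`.
lemma exists_vecMul_degree_lt_of_det_leadingRowCoeff_eq_zero {m : Matrix ι ι K[X]}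
    (h : (leadingRowCoeff m).det = 0) :
    ∃ (v : ι → K[X]) (i : ι), v i = 1 ∧ ∀ j, ((v ᵥ* m) j).degree < rowDegree m i := by
  obtain ⟨c, hc, hcm⟩ := exists_vecMul_eq_zero_iff.mpr h
  obtain ⟨i, hi, hmax⟩ := Set.exists_max_image (Function.support c) (rowDegree m)
    (Set.toFinite _) (Function.support_nonempty_iff.mpr hc)
  let v : ι → K[X] := fun j => C ((c i)⁻¹ * c j) * X ^ (rowDegree m i - rowDegree m j)
  have hv : ∀ j, v j ≠ 0 → c j ≠ 0 := fun j hj hcj => hj (by simp [v, hcj])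
  have hle : ∀ k, ((v ᵥ* m) k).degree < (rowDegree m i + 1 : ℕ) := degree_vecMul_lt fun j hj => by
    have : (v j).natDegree ≤ rowDegree m i - rowDegree m j := natDegree_C_mul_X_pow_le _ _
    have := hmax j (hv j hj)
    omega
  have hcoeff : ∀ j k,
      (v j * m j k).coeff (rowDegree m i) = (c i)⁻¹ * (c j * leadingRowCoeff m j k) := by
    intro j k
    by_cases hj : c j = 0
    · simp [v, hj]
    · have hsub := Nat.sub_sub_self (hmax j hj)
      simp only [v]
      rw [mul_assoc, coeff_C_mul, coeff_X_pow_mul', if_pos (Nat.sub_le _ _), hsub, mul_assoc]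
      rfl
  have htop : ∀ k, ((v ᵥ* m) k).coeff (rowDegree m i) = 0 := fun k => calc
    ((v ᵥ* m) k).coeff (rowDegree m i) = (c i)⁻¹ * (c ᵥ* leadingRowCoeff m) k := by
      simp only [vecMul, dotProduct, finsetSum_coeff, hcoeff, Finset.mul_sum]
    _ = 0 := by rw [hcm, Pi.zero_apply, mul_zero]
  refine ⟨v, i, by simp [v, inv_mul_cancel₀ hi, -map_mul], fun k => ?_⟩
  refine (degree_lt_iff_coeff_zero _ _).mpr fun N hN => ?_
  rcases hN.eq_or_lt with rfl | hN
  · exact htop k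
  · exact (degree_lt_iff_coeff_zero _ _).mp (hle k) N hN

lemma exists_adjoinRoot_mk_eq_natDegree_lt {g : K[X]} (hg : g.natDegree ≠ 0) (a : AdjoinRoot g) :
    ∃ f : K[X], AdjoinRoot.mk g f = a ∧ f.natDegree < g.natDegree := by
  obtain ⟨f, rfl⟩ := AdjoinRoot.mk_surjective a
  refine ⟨f % g, AdjoinRoot.mk_eq_mk.mpr ?_, natDegree_mod_lt f hg⟩
  exact ⟨-(f / g), by rw [EuclideanDomain.mod_eq_sub_mul_div]; ring⟩

lemma eq_of_adjoinRoot_mk_eq_of_natDegree_lt [NoZeroDivisors R] {g p q : R[X]}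
    (hp : p.natDegree < g.natDegree) (hq : q.natDegree < g.natDegree)
    (h : AdjoinRoot.mk g p = AdjoinRoot.mk g q) : p = q := by
  refine sub_eq_zero.mp (eq_zero_of_dvd_of_natDegree_lt (AdjoinRoot.mk_eq_mk.mp h) ?_)
  exact (natDegree_sub_le p q).trans_lt (max_lt hp hq)

-- Modulo `g` the matrix has a left kernel vector over the field `K[X] / (g)`; normalise it at `i`
-- and lift it to polynomials of degree less than that of `g`.
lemma exists_dvd_vecMul_of_dvd_det {m : Matrix ι ι K[X]} {g : K[X]} (hg : Irreducible g)
    (h : g ∣ m.det) (d : ι → ℕ) :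
    ∃ (v : ι → K[X]) (i : ι), v i = 1 ∧ (∀ j, (v j).natDegree < g.natDegree) ∧
      (∀ j, v j ≠ 0 → d j ≤ d i) ∧ ∀ j, g ∣ (v ᵥ* m) j := by
  have : Fact (Irreducible g) := ⟨hg⟩
  have hdet : ((AdjoinRoot.mk g).mapMatrix m).det = 0 := by
    rw [← RingHom.map_det, AdjoinRoot.mk_eq_zero.mpr h]
  obtain ⟨c, hc, hcm⟩ := exists_vecMul_eq_zero_iff.mpr hdet
  obtain ⟨i, hi, hmax⟩ := Set.exists_max_image (Function.support c) d
    (Set.toFinite _) (Function.support_nonempty_iff.mpr hc)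
  choose v hmk hdeg using fun j =>
    exists_adjoinRoot_mk_eq_natDegree_lt hg.natDegree_pos.ne' ((c i)⁻¹ * c j)
  refine ⟨v, i, ?_, hdeg, fun j hj => hmax j fun hcj => hj ?_, fun k => ?_⟩
  · refine eq_of_adjoinRoot_mk_eq_of_natDegree_lt (hdeg i) (by simpa using hg.natDegree_pos) ?_
    rw [hmk, inv_mul_cancel₀ hi, map_one]
  · refine eq_of_adjoinRoot_mk_eq_of_natDegree_lt (hdeg j) (by simpa using hg.natDegree_pos) ?_
    rw [hmk, hcj, mul_zero, map_zero]
  · refine AdjoinRoot.mk_eq_zero.mp ?_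
    calc AdjoinRoot.mk g ((v ᵥ* m) k)
        = (c i)⁻¹ * (c ᵥ* (AdjoinRoot.mk g).mapMatrix m) k := by
          simp only [vecMul, dotProduct, map_sum, map_mul, hmk, mul_assoc, Finset.mul_sum,
            RingHom.mapMatrix_apply, map_apply]
      _ = 0 := by rw [hcm, Pi.zero_apply, mul_zero]

lemma exists_vecMul_eq_smul_of_dvd_det {m : Matrix ι ι K[X]} {g : K[X]} (hg : Irreducible g)
    (h : g ∣ m.det) :
    ∃ (v : ι → K[X]) (i : ι) (r : ι → K[X]), v i = 1 ∧ v ᵥ* m = g • r ∧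
      ∀ j, (r j).degree < rowDegree m i := by
  obtain ⟨v, i, hvi, hdeg, hmax, hdvd⟩ := exists_dvd_vecMul_of_dvd_det hg h (rowDegree m)
  choose r hr using hdvd
  refine ⟨v, i, r, hvi, funext hr, fun j => ?_⟩
  have hlt : ((v ᵥ* m) j).degree < (g.natDegree + rowDegree m i : ℕ) :=
    degree_vecMul_lt (fun k hk => add_lt_add_of_lt_of_le (hdeg k) (hmax k hk)) j
  rw [hr, degree_mul, Nat.cast_add, ← degree_eq_natDegree hg.ne_zero] at hlt
  exact lt_of_add_lt_add_left hlt

lemma exists_eq_mul_of_det_leadingRowCoeff_eq_zero {m : Matrix ι ι K[X]} (hm : m.det ≠ 0)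
    (h : (leadingRowCoeff m).det = 0) :
    ∃ Q m' : Matrix ι ι K[X], m = Q * m' ∧ Q.det = 1 ∧
      ∑ k, rowDegree m' k < ∑ k, rowDegree m k := by
  obtain ⟨v, i, hvi, hdeg⟩ := exists_vecMul_degree_lt_of_det_leadingRowCoeff_eq_zero h
  exact exists_eq_mul_of_vecMul_eq_smul hm hvi (one_smul _ _).symm hdeg

lemma exists_eq_mul_of_dvd_det {m : Matrix ι ι K[X]} (hm : m.det ≠ 0) {g : K[X]}
    (hg : Irreducible g) (h : g ∣ m.det) :
    ∃ Q m' : Matrix ι ι K[X], m = Q * m' ∧ Q.det = g ∧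
      ∑ k, rowDegree m' k < ∑ k, rowDegree m k := by
  obtain ⟨v, i, r, hvi, hr, hdeg⟩ := exists_vecMul_eq_smul_of_dvd_det hg h
  exact exists_eq_mul_of_vecMul_eq_smul hm hvi hr hdeg

theorem exists_eq_mul_rowReduced {G : Set K[X]} (hG : ∀ g ∈ G, Irreducible g)
    {m : Matrix ι ι K[X]} (hm : m.det ≠ 0) :
    ∃ Q r : Matrix ι ι K[X], m = Q * r ∧ Q.det ∈ Submonoid.closure G ∧
      (leadingRowCoeff r).det ≠ 0 ∧ ∀ g ∈ G, ¬ g ∣ r.det := by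
  let IsCofactor (r : Matrix ι ι K[X]) : Prop :=
    ∃ Q : Matrix ι ι K[X], m = Q * r ∧ Q.det ∈ Submonoid.closure G
  have hself : IsCofactor m := ⟨1, (Matrix.one_mul m).symm, by rw [det_one]; exact one_mem _⟩
  obtain ⟨r, ⟨Q, hQr, hQ⟩, hmin⟩ :=
    exists_minimalFor_of_wellFoundedLT IsCofactor (fun r => ∑ k, rowDegree r k) ⟨m, hself⟩
  have hr : r.det ≠ 0 := right_ne_zero_of_mul (det_mul Q r ▸ hQr ▸ hm)
  have not_reducible : ∀ Q' r' : Matrix ι ι K[X], r = Q' * r' →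
      Q'.det ∈ Submonoid.closure G → ¬ ∑ k, rowDegree r' k < ∑ k, rowDegree r k := by
    intro Q' r' hr' hQ' hlt
    have hcofactor : IsCofactor r' :=
      ⟨Q * Q', by rw [Matrix.mul_assoc, ← hr', hQr], det_mul Q Q' ▸ mul_mem hQ hQ'⟩
    exact (hmin hcofactor hlt.le).not_gt hlt
  refine ⟨Q, r, hQr, hQ, fun hlead => ?_, fun g hg hdvd => ?_⟩
  · obtain ⟨Q', r', hr', hQ', hlt⟩ := exists_eq_mul_of_det_leadingRowCoeff_eq_zero hr hlead
    exact not_reducible Q' r' hr' (hQ' ▸ one_mem _) hlt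
  · obtain ⟨Q', r', hr', hQ', hlt⟩ := exists_eq_mul_of_dvd_det hr (hG g hg) hdvd
    exact not_reducible Q' r' hr' (hQ' ▸ Submonoid.subset_closure hg) hlt

end RowReduction

section UnitDisc

lemma norm_eq_of_isConjRoot {z w : ℂ} (h : IsConjRoot ℝ z w) : ‖z‖ = ‖w‖ := by
  have : IsAlgClosure ℝ ℂ := ⟨inferInstance, inferInstance⟩
  obtain ⟨σ, rfl⟩ := isConjRoot_iff_exists_algEquiv.mp h
  rcases Complex.real_algHom_eq_id_or_conj (σ : ℂ →ₐ[ℝ] ℂ) with hσ | hσ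
  · exact congrArg norm (DFunLike.congr_fun hσ w)
  · exact (congrArg norm (DFunLike.congr_fun hσ w)).trans (Complex.norm_conj w)

/-- The irreducible real polynomials all of whose complex zeros lie outside the closed unit disc:
the factors that the left factor `p` of a Wiener–Hopf factorisation may absorb. -/
def outerIrreducibles : Set ℝ[X] :=
  {g | Irreducible g ∧ ∀ z : ℂ, ‖z‖ ≤ 1 → aeval z g ≠ 0}

lemma minpoly_mem_outerIrreducibles {z : ℂ} (hz : 1 < ‖z‖) : minpoly ℝ z ∈ outerIrreducibles := by
  have hint : IsIntegral ℝ z := Algebra.IsIntegral.isIntegral z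
  refine ⟨minpoly.irreducible hint, fun w hw h => ?_⟩
  have := norm_eq_of_isConjRoot ((isConjRoot_iff_aeval_eq_zero hint).mpr h)
  linarith

lemma aeval_ne_zero_of_mem_closure_outerIrreducibles {q : ℝ[X]}
    (hq : q ∈ Submonoid.closure outerIrreducibles) {z : ℂ} (hz : ‖z‖ ≤ 1) : aeval z q ≠ 0 := by
  have hle : Submonoid.closure outerIrreducibles ≤
      (nonZeroDivisors ℂ).comap (aeval z : ℝ[X] →ₐ[ℝ] ℂ) :=
    Submonoid.closure_le.mpr fun g hg => mem_nonZeroDivisors_of_ne_zero (hg.2 z hz)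
  exact nonZeroDivisors.ne_zero (hle hq)

end UnitDisc

section WienerHopf

variable {n : ℕ}

lemma det_evalMat (M : Matrix (Fin n) (Fin n) ℝ[X]) (z : ℂ) : (evalMat M z).det = aeval z M.det :=
  ((aeval z : ℝ[X] →ₐ[ℝ] ℂ).map_det M).symm

lemma polyToRat_eq_sMat_mul_invSub_reflectRows (m : Matrix (Fin n) (Fin n) ℝ[X]) :
    polyToRat m = sMat n (fun i => rowDegree m i) * invSub (reflectRows m) := by
  have hX : ⇑(aeval (R := ℝ) (RatFunc.X : RatFunc ℝ)) = algebraMap ℝ[X] (RatFunc ℝ) :=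
    funext RatFunc.aeval_X_left_eq_algebraMap
  simp only [polyToRat, sMat, invSub, zpow_natCast, ← hX]
  exact map_aeval_eq_diagonal_mul_map_aeval_reflectRows m RatFunc.X_ne_zero

lemma isWHF_submatrix_of_antitone {b p F : Matrix (Fin n) (Fin n) ℝ[X]} {κ : Fin n → ℤ}
    (hp : ∀ z : ℂ, ‖z‖ ≤ 1 → (evalMat p z).det ≠ 0) (hF : ∀ w : ℂ, ‖w‖ ≤ 1 → (evalMat F w).det ≠ 0)
    (hb : polyToRat b = polyToRat p * sMat n κ * invSub F) {σ : Equiv.Perm (Fin n)}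
    (hσ : Antitone (κ ∘ σ)) : IsWHF b (p.submatrix id σ) (F.submatrix σ id) (κ ∘ σ) where
  p_noZero z hz := by simpa [det_evalMat, det_permute'] using hp z hz
  F_noZero w hw := by simpa [det_evalMat, det_permute] using hF w hw
  anti _ _ hij := hσ hij
  eq := by
    have hS : sMat n (κ ∘ σ) = (sMat n κ).submatrix σ σ :=
      (submatrix_diagonal_equiv (fun i => RatFunc.X ^ κ i) σ).symm
    calc polyToRat b
        = ((polyToRat p).submatrix id σ * (sMat n κ).submatrix σ σ) *
            (invSub F).submatrix σ id := by
          rw [submatrix_mul_equiv, submatrix_mul_equiv, submatrix_id_id, hb]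
      _ = polyToRat (p.submatrix id σ) * sMat n (κ ∘ σ) * invSub (F.submatrix σ id) := by
          rw [hS]; rfl

end WienerHopf

/-- every real polynomial matrix with no determinantal zeros on the unit
circle admits a Wiener–Hopf factorisation. -/
theorem stmt7 {n : ℕ} (b : Matrix (Fin n) (Fin n) (Polynomial ℝ))
    (hcirc : ∀ z : ℂ, ‖z‖ = 1 → (evalMat b z).det ≠ 0) :
    ∃ (p F : Matrix (Fin n) (Fin n) (Polynomial ℝ)) (κ : Fin n → ℤ),
      IsWHF b p F κ := by
  have hb : b.det ≠ 0 := fun h => hcirc 1 norm_one (by rw [det_evalMat, h, map_zero])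
  obtain ⟨Q, r, rfl, hQ, hlead, hdvd⟩ :=
    exists_eq_mul_rowReduced (G := outerIrreducibles) (fun _ hg => hg.1) hb
  have hr : ∀ z : ℂ, 1 ≤ ‖z‖ → aeval z r.det ≠ 0 := by
    intro z hz hrz
    rcases hz.eq_or_lt with hz | hz
    · exact hcirc z hz.symm (by rw [det_evalMat, det_mul, map_mul, hrz, mul_zero])
    · exact hdvd _ (minpoly_mem_outerIrreducibles hz) (minpoly.dvd ℝ z hrz)
  have hp : ∀ z : ℂ, ‖z‖ ≤ 1 → (evalMat Q z).det ≠ 0 := fun z hz =>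
    det_evalMat Q z ▸ aeval_ne_zero_of_mem_closure_outerIrreducibles hQ hz
  have hF : ∀ w : ℂ, ‖w‖ ≤ 1 → (evalMat (reflectRows r) w).det ≠ 0 := fun w hw =>
    det_evalMat (reflectRows r) w ▸ aeval_det_reflectRows_ne_zero hlead fun hw0 =>
      hr w⁻¹ (by rw [norm_inv]; exact (one_le_inv₀ (norm_pos_iff.mpr hw0)).mpr hw)
  let κ : Fin n → ℤ := fun i => rowDegree r i
  have hfac : polyToRat (Q * r) = polyToRat Q * sMat n κ * invSub (reflectRows r) := by
    rw [Matrix.mul_assoc, ← polyToRat_eq_sMat_mul_invSub_reflectRows]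
    exact Matrix.map_mul
  have hκ : Antitone (κ ∘ Tuple.sort (OrderDual.toDual ∘ κ)) :=
    monotone_toDual_comp_iff.mp (Tuple.monotone_sort (OrderDual.toDual ∘ κ))
  exact ⟨_, _, _, isWHF_submatrix_of_antitone hp hF hfac hκ⟩
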